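/- Suppose that R(z) is invertible for every z in an open annulus containing the unit circle 𝕋. Then R admits a left canonical Wiener–Hopf factorization if and only if there exists a Q̃ ∈ B(X₋, X₊) such that δ − γ₊Q̃β₋ is invertible, Q̃ satisfies the Riccati equation Q̃ = α₊Q̃α₋ + (β₊ − α₊Q̃β₋)(δ − γ₊Q̃β₋)⁻¹(γ₋ − γ₊Q̃α₋), and Q̃ is stabilizing in the sense that the operators α̃₋° := α₋ − β₋(δ − γ₊Q̃β₋)⁻¹(γ₋ − γ₊Q̃α₋) and α̃₊° := α₊ − (β₊ − α₊Q̃β₋)(δ − γ₊Q̃β₋)⁻¹γ₊ both have spectrum contained in the open unit disc 𝔻. Moreover, there exists at most one such stabilizing solution Q̃. -/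

import Mathlib

open Metric ContinuousLinearMap

noncomputable section

variable {U Xp Xm : Type*}
  [NormedAddCommGroup U] [InnerProductSpace ℂ U] [CompleteSpace U]
  [NormedAddCommGroup Xp] [InnerProductSpace ℂ Xp] [CompleteSpace Xp]
  [NormedAddCommGroup Xm] [InnerProductSpace ℂ Xm] [CompleteSpace Xm]

/-- The stable representation
`R(z) = δ + z·γ₊(I − zα₊)⁻¹β₊ + γ₋(zI − α₋)⁻¹β₋`. -/
def Rfun (δ : U →L[ℂ] U) (γp : Xp →L[ℂ] U) (αp : Xp →L[ℂ] Xp) (βp : U →L[ℂ] Xp)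
    (γm : Xm →L[ℂ] U) (αm : Xm →L[ℂ] Xm) (βm : U →L[ℂ] Xm) (z : ℂ) : U →L[ℂ] U :=
  δ + z • ((γp ∘L Ring.inverse (1 - z • αp)) ∘L βp) +
    (γm ∘L Ring.inverse (z • (1 : Xm →L[ℂ] Xm) - αm)) ∘L βm

/-- A `B(U)`-valued function of "plus type": analytic on an open neighborhood of the
closed unit disc, with invertible values and analytic pointwise inverse there. -/
def PlusFactor {E : Type*} [NormedAddCommGroup E] [InnerProductSpace ℂ E] [CompleteSpace E]
    (V : ℂ → (E →L[ℂ] E)) : Prop :=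
  ∃ S : Set ℂ, IsOpen S ∧ closedBall (0 : ℂ) 1 ⊆ S ∧
    AnalyticOnNhd ℂ V S ∧ (∀ z ∈ S, IsUnit (V z)) ∧
    AnalyticOnNhd ℂ (fun z => Ring.inverse (V z)) S

/-- A `B(U)`-valued function of "minus type" on the complement of the open unit disc:
`z ↦ V(1/z)` (with the value at `0` corresponding to `V(∞)`) extends to a function
that is analytic on an open neighborhood of the closed unit disc, with invertible
values and analytic pointwise inverse there. -/
def MinusFactor {E : Type*} [NormedAddCommGroup E] [InnerProductSpace ℂ E] [CompleteSpace E]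
    (V : ℂ → (E →L[ℂ] E)) : Prop :=
  ∃ Vhat : ℂ → (E →L[ℂ] E), PlusFactor Vhat ∧ ∀ z : ℂ, 1 ≤ ‖z‖ → V z = Vhat z⁻¹

/-- A right canonical Wiener–Hopf factorization `R(z) = V₋(z)V₊(z)` on the unit circle. -/
def RightCanonicalWH {E : Type*} [NormedAddCommGroup E] [InnerProductSpace ℂ E]
    [CompleteSpace E] (R : ℂ → (E →L[ℂ] E)) : Prop :=
  ∃ Vm Vp : ℂ → (E →L[ℂ] E), MinusFactor Vm ∧ PlusFactor Vp ∧
    ∀ z : ℂ, ‖z‖ = 1 → R z = Vm z * Vp z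

/-- A left canonical Wiener–Hopf factorization `R(z) = W₊(z)W₋(z)` on the unit circle. -/
def LeftCanonicalWH {E : Type*} [NormedAddCommGroup E] [InnerProductSpace ℂ E]
    [CompleteSpace E] (R : ℂ → (E →L[ℂ] E)) : Prop :=
  ∃ Wp Wm : ℂ → (E →L[ℂ] E), PlusFactor Wp ∧ MinusFactor Wm ∧
    ∀ z : ℂ, ‖z‖ = 1 → R z = Wp z * Wm z

/-- `Q̃` solves the left Riccati equation:
`δ − γ₊Q̃β₋` is invertible and
`Q̃ = α₊Q̃α₋ + (β₊ − α₊Q̃β₋)(δ − γ₊Q̃β₋)⁻¹(γ₋ − γ₊Q̃α₋)`. -/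
def SolvesLeftRiccati (δ : U →L[ℂ] U) (γp : Xp →L[ℂ] U) (αp : Xp →L[ℂ] Xp)
    (βp : U →L[ℂ] Xp) (γm : Xm →L[ℂ] U) (αm : Xm →L[ℂ] Xm) (βm : U →L[ℂ] Xm)
    (Qt : Xm →L[ℂ] Xp) : Prop :=
  IsUnit (δ - (γp ∘L Qt) ∘L βm) ∧
    Qt = (αp ∘L Qt) ∘L αm +
      ((βp - (αp ∘L Qt) ∘L βm) ∘L Ring.inverse (δ - (γp ∘L Qt) ∘L βm)) ∘L
        (γm - (γp ∘L Qt) ∘L αm)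

/-- A solution `Q̃` of the left Riccati equation is stabilizing if
`α̃₋° := α₋ − β₋(δ − γ₊Q̃β₋)⁻¹(γ₋ − γ₊Q̃α₋)` and
`α̃₊° := α₊ − (β₊ − α₊Q̃β₋)(δ − γ₊Q̃β₋)⁻¹γ₊` have spectrum in the open unit disc. -/
def StabilizingLeftRiccati (δ : U →L[ℂ] U) (γp : Xp →L[ℂ] U) (αp : Xp →L[ℂ] Xp)
    (βp : U →L[ℂ] Xp) (γm : Xm →L[ℂ] U) (αm : Xm →L[ℂ] Xm) (βm : U →L[ℂ] Xm)
    (Qt : Xm →L[ℂ] Xp) : Prop :=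
  spectrum ℂ
      (αm - (βm ∘L Ring.inverse (δ - (γp ∘L Qt) ∘L βm)) ∘L (γm - (γp ∘L Qt) ∘L αm))
      ⊆ ball (0 : ℂ) 1 ∧
    spectrum ℂ
      (αp - ((βp - (αp ∘L Qt) ∘L βm) ∘L Ring.inverse (δ - (γp ∘L Qt) ∘L βm)) ∘L γp)
      ⊆ ball (0 : ℂ) 1

section FourierCoefficients

variable {ι E F G : Type*} [NormedAddCommGroup E] [NormedSpace ℂ E]
  [NormedAddCommGroup F] [NormedSpace ℂ F] [NormedAddCommGroup G] [NormedSpace ℂ G]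

/-- The `k`-th Fourier coefficient of a function on the unit circle. -/
def circleCoeff (f : ℂ → E) (k : ℤ) : E :=
  Real.circleAverage (fun z => z ^ (-k) • f z) 0 1

/-- On the unit circle, `f` is the sum of the absolutely convergent series `∑ z ^ (e i) • c i`. -/
structure HasCircleSeries (f : ℂ → E) (c : ι → E) (e : ι → ℤ) : Prop where
  summable_norm : Summable fun i => ‖c i‖
  hasSum : ∀ z : ℂ, ‖z‖ = 1 → HasSum (fun i => z ^ e i • c i) (f z)

lemma continuousOn_zpow_sphere (k : ℤ) : ContinuousOn (fun z : ℂ => z ^ k) (sphere 0 1) := by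
  refine (continuousOn_zpow₀ k).mono fun z hz => ?_
  rintro rfl
  simp at hz

lemma HasCircleSeries.continuousOn [CompleteSpace E] {f : ℂ → E} {c : ι → E} {e : ι → ℤ}
    (h : HasCircleSeries f c e) : ContinuousOn f (sphere 0 1) := by
  have key : ContinuousOn (fun z : ℂ => ∑' i, z ^ e i • c i) (sphere 0 1) := by
    refine continuousOn_tsum (fun i => ?_) h.summable_norm fun i z hz => ?_
    · exact (continuousOn_zpow_sphere _).smul continuousOn_const
    · have hz' : ‖z‖ = 1 := by simpa using hz
      simp [norm_smul, hz']
  exact key.congr fun z hz => ((h.hasSum z (by simpa using hz)).tsum_eq).symm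

lemma circleCoeff_congr {f g : ℂ → E} (h : ∀ z : ℂ, ‖z‖ = 1 → f z = g z) (k : ℤ) :
    circleCoeff f k = circleCoeff g k := by
  refine Real.circleAverage_congr_sphere fun z hz => ?_
  have hz' : ‖z‖ = 1 := by simpa using hz
  simp only [h z hz']

lemma circleCoeff_const [CompleteSpace E] (a : E) (k : ℤ) :
    circleCoeff (fun _ => a) k = if k = 0 then a else 0 := by
  split_ifs with hk
  · subst hk
    simp [circleCoeff, Real.circleAverage_const]
  · rw [circleCoeff, Real.circleAverage_eq_circleIntegral one_ne_zero]
    have h0 : (∮ z in C(0, 1), (z - 0 : ℂ)⁻¹ • z ^ (-k) • a) = 0 := by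
      have h1 : (∮ z in C(0, 1), (z - 0 : ℂ)⁻¹ • z ^ (-k) • a)
          = ∮ z in C(0, 1), ((z - 0 : ℂ) ^ (-k - 1)) • a := by
        refine circleIntegral.integral_congr zero_le_one fun z hz => ?_
        have hz0 : z ≠ 0 := by rintro rfl; simp at hz
        simp only [sub_zero, smul_smul, zpow_sub_one₀ hz0, mul_comm]
      rw [h1, circleIntegral.integral_smul_const,
        circleIntegral.integral_sub_zpow_of_ne (by omega), zero_smul]
    rw [h0, smul_zero]

lemma hasSum_circleCoeff [Countable ι] [CompleteSpace E] [CompleteSpace F] {T : ι → E →L[ℂ] F}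
    (hT : Summable fun i => ‖T i‖) (e : ι → ℤ) {g : ℂ → E} (hg : ContinuousOn g (sphere 0 1))
    {h : ℂ → F} (hh : ∀ z : ℂ, ‖z‖ = 1 → HasSum (fun i => z ^ e i • T i (g z)) (h z)) (k : ℤ) :
    HasSum (fun i => T i (circleCoeff g (k - e i))) (circleCoeff h k) := by
  obtain ⟨M, hM⟩ := (isCompact_sphere (0 : ℂ) 1).exists_bound_of_continuousOn hg
  have hmem : ∀ θ : ℝ, circleMap 0 1 θ ∈ sphere (0 : ℂ) 1 := fun θ =>
    circleMap_mem_sphere 0 zero_le_one θ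
  have hnorm : ∀ θ : ℝ, ‖circleMap 0 1 θ‖ = 1 := fun θ => by simp
  have hcont : ∀ i, Continuous fun θ : ℝ =>
      circleMap 0 1 θ ^ (-(k - e i)) • g (circleMap 0 1 θ) := fun i =>
    ((continuousOn_zpow_sphere _).smul hg).comp_continuous (continuous_circleMap 0 1) hmem
  have hsum : HasSum (fun i => ∫ θ in (0 : ℝ)..2 * Real.pi,
        T i (circleMap 0 1 θ ^ (-(k - e i)) • g (circleMap 0 1 θ)))
      (∫ θ in (0 : ℝ)..2 * Real.pi, circleMap 0 1 θ ^ (-k) • h (circleMap 0 1 θ)) := by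
    refine intervalIntegral.hasSum_integral_of_dominated_convergence (fun i _ => ‖T i‖ * M)
      (fun i => ((T i).continuous.comp (hcont i)).aestronglyMeasurable) (fun i => ?_) ?_ ?_ ?_
    · refine .of_forall fun θ _ => ((T i).le_opNorm _).trans ?_
      gcongr
      simpa [norm_smul] using hM _ (hmem θ)
    · exact .of_forall fun θ _ => hT.mul_right M
    · exact intervalIntegrable_const
    · refine .of_forall fun θ _ => ?_
      refine ((hh _ (hnorm θ)).const_smul (circleMap 0 1 θ ^ (-k))).congr_fun ?_
      intro i
      have hz0 : circleMap 0 1 θ ≠ 0 := fun h0 => by simpa [h0] using hnorm θ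
      rw [map_smul, smul_smul, ← zpow_add₀ hz0]
      congr 2
      ring
  have := hsum.const_smul (2 * Real.pi)⁻¹
  refine this.congr_fun fun i => ?_
  rw [ContinuousLinearMap.intervalIntegral_comp_comm _ ((hcont i).intervalIntegrable _ _)]
  simp [circleCoeff, Real.circleAverage_def]

lemma HasCircleSeries.hasSum_circleCoeff_comp [Countable ι] [CompleteSpace F] [CompleteSpace G]
    {f : ℂ → F →L[ℂ] G} {c : ι → F →L[ℂ] G} {e : ι → ℤ} (hf : HasCircleSeries f c e)
    {g : ℂ → E →L[ℂ] F} (hg : ContinuousOn g (sphere 0 1)) (k : ℤ) :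
    HasSum (fun i => c i ∘L circleCoeff g (k - e i)) (circleCoeff (fun z => f z ∘L g z) k) := by
  refine hasSum_circleCoeff (T := fun i => compL ℂ E F G (c i)) ?_ e hg (fun z hz => ?_) k
  · exact .of_nonneg_of_le (fun _ => norm_nonneg _)
      (fun i => ContinuousLinearMap.opNorm_le_bound _ (norm_nonneg _) fun x => by
        simpa using opNorm_comp_le _ _) hf.summable_norm
  · simpa using ((compL ℂ E F G).flip (g z)).hasSum (hf.hasSum z hz)

lemma HasCircleSeries.hasSum_comp_circleCoeff [Countable ι] [CompleteSpace F] [CompleteSpace G]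
    {f : ℂ → E →L[ℂ] F} {c : ι → E →L[ℂ] F} {e : ι → ℤ} (hf : HasCircleSeries f c e)
    {g : ℂ → F →L[ℂ] G} (hg : ContinuousOn g (sphere 0 1)) (k : ℤ) :
    HasSum (fun i => circleCoeff g (k - e i) ∘L c i) (circleCoeff (fun z => g z ∘L f z) k) := by
  refine hasSum_circleCoeff (T := fun i => (compL ℂ E F G).flip (c i)) ?_ e hg
    (fun z hz => ?_) k
  · exact .of_nonneg_of_le (fun _ => norm_nonneg _)
      (fun i => ContinuousLinearMap.opNorm_le_bound _ (norm_nonneg _) fun x => by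
        simpa [mul_comm] using opNorm_comp_le _ _) hf.summable_norm
  · simpa using ((compL ℂ E F G) (g z)).hasSum (hf.hasSum z hz)

lemma HasCircleSeries.circleCoeff_eq [Countable ι] [CompleteSpace E]
    {f : ℂ → E} {c : ι → E} {e : ι → ℤ} (hf : HasCircleSeries f c e)
    (he : Function.Injective e) (i : ι) : circleCoeff f (e i) = c i := by
  have h := hasSum_circleCoeff (T := fun i => toSpanSingleton ℂ (c i)) (g := fun _ => (1 : ℂ))
    (by simpa using hf.summable_norm) e continuousOn_const
    (fun z hz => by simpa using hf.hasSum z hz) (e i)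
  refine h.unique ?_
  have := hasSum_single (f := fun j => toSpanSingleton ℂ (c j)
    (circleCoeff (fun _ => (1 : ℂ)) (e i - e j))) i fun j hj => by
      have : e i - e j ≠ 0 := sub_ne_zero.2 fun h => hj (he h.symm)
      simp [circleCoeff_const, this]
  simpa [circleCoeff_const] using this

end FourierCoefficients

section StableElements

variable {A : Type*} [NormedRing A] [NormedAlgebra ℂ A] {a : A}

lemma smul_one_sub_eq {z : ℂ} (hz : z ≠ 0) (a : A) :
    z • (1 : A) - a = z • (1 - z⁻¹ • a) := by
  rw [smul_sub, smul_inv_smul₀ hz]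

lemma spectrum_subset_ball_of_isUnit
    (h : ∀ w : ℂ, ‖w‖ ≤ 1 → IsUnit (1 - w • a)) : spectrum ℂ a ⊆ ball 0 1 := by
  intro z hz
  by_contra hz1
  have hz1' : 1 ≤ ‖z‖ := by simpa using hz1
  have hz0 : z ≠ 0 := by rintro rfl; norm_num at hz1'
  refine hz (spectrum.mem_resolventSet_iff.2 ?_)
  have := (h z⁻¹ (by rw [norm_inv]; exact inv_le_one_of_one_le₀ hz1')).smul (Units.mk0 z hz0)
  rw [Algebra.algebraMap_eq_smul_one, smul_one_sub_eq hz0]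
  exact this

lemma inverse_smul_one_sub {z : ℂ} (hz : z ≠ 0) (h : IsUnit (1 - z⁻¹ • a)) :
    Ring.inverse (z • (1 : A) - a) = z⁻¹ • Ring.inverse (1 - z⁻¹ • a) := by
  rw [smul_one_sub_eq hz]
  refine Ring.inverse_unit ⟨_, z⁻¹ • Ring.inverse (1 - z⁻¹ • a), ?_, ?_⟩
  · rw [smul_mul_smul_comm, mul_inv_cancel₀ hz, one_smul, Ring.mul_inverse_cancel _ h]
  · rw [smul_mul_smul_comm, inv_mul_cancel₀ hz, one_smul, Ring.inverse_mul_cancel _ h]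

variable [CompleteSpace A]

lemma summable_norm_pow_of_spectrum_subset_ball (ha : spectrum ℂ a ⊆ ball 0 1) :
    Summable fun n : ℕ => ‖a ^ n‖ := by
  nontriviality A
  have hr : spectralRadius ℂ a < 1 := by
    refine mod_cast spectrum.spectralRadius_lt_of_forall_lt a (r := 1) fun z hz => ?_
    have : ‖z‖ < 1 := by simpa using ha hz
    exact mod_cast this
  obtain ⟨q, hq, hq1⟩ := ENNReal.lt_iff_exists_nnreal_btwn.1 hr
  have hq1' : q < 1 := mod_cast hq1
  have hev := (spectrum.pow_nnnorm_pow_one_div_tendsto_nhds_spectralRadius a).eventually_lt_const hq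
  refine summable_of_isBigO_nat (summable_geometric_of_lt_one q.2 hq1') (.of_bound 1 ?_)
  filter_upwards [hev, Filter.eventually_gt_atTop 0] with n hn hn0
  have h1 : (‖a ^ n‖₊ : ENNReal) ≤ (q : ENNReal) ^ n := by
    rw [← ENNReal.rpow_natCast, ← ENNReal.rpow_inv_le_iff (by positivity)]
    simpa using hn.le
  have h2 : ‖a ^ n‖₊ ≤ q ^ n := mod_cast h1
  simpa using (show ‖a ^ n‖ ≤ (q : ℝ) ^ n from mod_cast h2)

lemma summable_smul_pow (ha : spectrum ℂ a ⊆ ball 0 1) {w : ℂ} (hw : ‖w‖ ≤ 1) :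
    Summable fun n : ℕ => (w • a) ^ n := by
  refine .of_norm_bounded (summable_norm_pow_of_spectrum_subset_ball ha) fun n => ?_
  rw [smul_pow, norm_smul, norm_pow]
  exact mul_le_of_le_one_left (norm_nonneg _) (pow_le_one₀ (norm_nonneg _) hw)

lemma isUnit_one_sub_smul (ha : spectrum ℂ a ⊆ ball 0 1) {w : ℂ} (hw : ‖w‖ ≤ 1) :
    IsUnit (1 - w • a) :=
  ⟨⟨_, _, (summable_smul_pow ha hw).one_sub_mul_tsum_pow,
    (summable_smul_pow ha hw).tsum_pow_mul_one_sub⟩, rfl⟩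

lemma hasSum_inverse_one_sub_smul (ha : spectrum ℂ a ⊆ ball 0 1) {w : ℂ} (hw : ‖w‖ ≤ 1) :
    HasSum (fun n : ℕ => w ^ n • a ^ n) (Ring.inverse (1 - w • a)) := by
  have hs := summable_smul_pow ha hw
  have : Ring.inverse (1 - w • a) = ∑' n, (w • a) ^ n :=
    Ring.inverse_unit ⟨_, _, hs.one_sub_mul_tsum_pow, hs.tsum_pow_mul_one_sub⟩
  rw [this]
  simpa only [smul_pow] using hs.hasSum

end StableElements

section SchurComplement

variable {E F : Type*} [NormedAddCommGroup E] [NormedSpace ℂ E]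
  [NormedAddCommGroup F] [NormedSpace ℂ F]

lemma inverse_apply_self {S : E →L[ℂ] E} (hS : IsUnit S) (x : E) : Ring.inverse S (S x) = x :=
  DFunLike.congr_fun (Ring.inverse_mul_cancel S hS) x

lemma apply_inverse_self {S : E →L[ℂ] E} (hS : IsUnit S) (x : E) : S (Ring.inverse S x) = x :=
  DFunLike.congr_fun (Ring.mul_inverse_cancel S hS) x

lemma isUnit_schurComplement {D : E →L[ℂ] E} {T : F →L[ℂ] F} (C : F →L[ℂ] E) (B : E →L[ℂ] F)
    (hD : IsUnit D) (hT : IsUnit T) (hS : IsUnit (T + (B ∘L Ring.inverse D) ∘L C)) :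
    IsUnit (D + (C ∘L Ring.inverse T) ∘L B) := by
  set S := T + (B ∘L Ring.inverse D) ∘L C with hSdef
  have hSx : ∀ x, S x = T x + B (Ring.inverse D (C x)) := fun x => rfl
  refine ⟨⟨_, Ring.inverse D - (Ring.inverse D) ∘L C ∘L (Ring.inverse S) ∘L B ∘L Ring.inverse D,
    ?_, ?_⟩, rfl⟩
  · ext u
    have h1 := apply_inverse_self hS (B (Ring.inverse D u))
    set x := Ring.inverse S (B (Ring.inverse D u)) with hx
    have h2 : B (Ring.inverse D u) - B (Ring.inverse D (C x)) = T x := by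
      rw [← h1, hSx, add_sub_cancel_right]
    have h3 : D (Ring.inverse D u - Ring.inverse D (C x)) +
        C (Ring.inverse T (B (Ring.inverse D u - Ring.inverse D (C x)))) = u := by
      rw [map_sub, map_sub, h2, inverse_apply_self hT, apply_inverse_self hD,
        apply_inverse_self hD, sub_add_cancel]
    exact h3
  · ext u
    set y := Ring.inverse T (B u) with hy
    have h1 : B u = T y := (apply_inverse_self hT _).symm
    have h2 : Ring.inverse S (B u + B (Ring.inverse D (C y))) = y := by
      rw [h1, ← hSx, inverse_apply_self hS]
    simp [← hy, inverse_apply_self hD, h2]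

end SchurComplement

section StableFactor

variable {E F : Type*} [NormedAddCommGroup E] [InnerProductSpace ℂ E]
  [NormedAddCommGroup F] [InnerProductSpace ℂ F] [CompleteSpace F]

lemma spectrum_subset_ball_of_isUnit_realization {D : E →L[ℂ] E} (hD : IsUnit D)
    {α : F →L[ℂ] F} {C : F →L[ℂ] E} {B : E →L[ℂ] F} (hα : spectrum ℂ α ⊆ ball 0 1)
    (h : ∀ w : ℂ, ‖w‖ ≤ 1 → IsUnit (D + w • ((C ∘L Ring.inverse (1 - w • α)) ∘L B))) :
    spectrum ℂ (α - (B ∘L Ring.inverse D) ∘L C) ⊆ ball 0 1 := by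
  refine spectrum_subset_ball_of_isUnit fun w hw => ?_
  have := isUnit_schurComplement (w • B) C (isUnit_one_sub_smul hα hw) hD (by
    convert h w hw using 1
    ext x
    simp)
  convert this using 1
  ext x
  simp [smul_sub, sub_add]

variable [CompleteSpace E]

lemma plusFactor_of_realization {D : E →L[ℂ] E} (hD : IsUnit D) {α : F →L[ℂ] F}
    {C : F →L[ℂ] E} {B : E →L[ℂ] F} (hα : spectrum ℂ α ⊆ ball 0 1)
    (hα' : spectrum ℂ (α - (B ∘L Ring.inverse D) ∘L C) ⊆ ball 0 1) :
    PlusFactor fun z => D + z • ((C ∘L Ring.inverse (1 - z • α)) ∘L B) := by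
  set α' := α - (B ∘L Ring.inverse D) ∘L C with hα'def
  have hunit : ∀ z : ℂ, IsUnit (1 - z • α) → IsUnit (1 - z • α') →
      IsUnit (D + z • ((C ∘L Ring.inverse (1 - z • α)) ∘L B)) := by
    intro z h1 h2
    have h := isUnit_schurComplement C (z • B) hD h1 (by
      convert h2 using 1
      ext x
      simp [hα'def, smul_sub, sub_add])
    simpa using h
  have hopen : ∀ a : F →L[ℂ] F, IsOpen {z : ℂ | IsUnit (1 - z • a)} := fun a =>
    Units.isOpen.preimage (f := fun z : ℂ => 1 - z • a) (by fun_prop)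
  have han : ∀ z : ℂ, IsUnit (1 - z • α) →
      AnalyticAt ℂ (fun z : ℂ => D + z • ((C ∘L Ring.inverse (1 - z • α)) ∘L B)) z := by
    rintro z ⟨u, hu⟩
    have h1 : AnalyticAt ℂ (fun z : ℂ => 1 - z • α) z := by fun_prop
    have h2 : AnalyticAt ℂ (fun z : ℂ => Ring.inverse (1 - z • α)) z :=
      AnalyticAt.fun_comp (hu ▸ analyticAt_inverse u) h1
    have h3 : AnalyticAt ℂ (fun z : ℂ => (C ∘L Ring.inverse (1 - z • α)) ∘L B) z :=
      ((((compL ℂ E F E).flip B).comp (compL ℂ F F E C)).analyticAt _).fun_comp h2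
    exact analyticAt_const.add (analyticAt_id.smul h3)
  refine ⟨{z | IsUnit (1 - z • α)} ∩ {z | IsUnit (1 - z • α')}, (hopen α).inter (hopen α'),
    fun z hz => ?_, fun z hz => han z hz.1, fun z hz => hunit z hz.1 hz.2, fun z hz => ?_⟩
  · have hz' : ‖z‖ ≤ 1 := by simpa using hz
    exact ⟨isUnit_one_sub_smul hα hz', isUnit_one_sub_smul hα' hz'⟩
  · obtain ⟨u, hu⟩ := hunit z hz.1 hz.2
    exact AnalyticAt.fun_comp (hu ▸ analyticAt_inverse u) (han z hz.1)

lemma PlusFactor.exists_series {V : ℂ → E →L[ℂ] E} (hV : PlusFactor V) :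
    ∃ c : ℕ → E →L[ℂ] E, (Summable fun n => ‖c n‖) ∧
      ∀ z : ℂ, ‖z‖ ≤ 1 → HasSum (fun n => z ^ n • c n) (V z) := by
  obtain ⟨S, hSo, hS, hVS, -, -⟩ := hV
  obtain ⟨ε, hε, hεS⟩ := (isCompact_closedBall (0 : ℂ) 1).exists_cthickening_subset_open hSo hS
  rw [cthickening_closedBall hε.le zero_le_one] at hεS
  lift ε to NNReal using hε.le
  have hε' : 0 < ε := mod_cast hε
  have hps := DifferentiableOn.hasFPowerSeriesOnBall (R := ε + 1)
    (hVS.differentiableOn.mono (by simpa using hεS)) (by positivity)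
  set p := cauchyPowerSeries V 0 (ε + 1 : NNReal)
  have hlt : (1 : ENNReal) < ((ε + 1 : NNReal) : ENNReal) := by
    exact_mod_cast lt_add_of_pos_left 1 hε'
  refine ⟨p.coeff, ?_, fun z hz => ?_⟩
  · have := p.summable_norm_mul_pow (r := 1) (lt_of_lt_of_le (by simpa using hlt) hps.r_le)
    simpa using this
  · have := hps.hasSum (y := z) (by
      rw [mem_eball_zero_iff]
      refine lt_of_le_of_lt ?_ hlt
      rw [← ENNReal.coe_one, enorm_le_coe]
      exact mod_cast hz)
    simpa [FormalMultilinearSeries.apply_eq_pow_smul_coeff] using this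

lemma PlusFactor.inverse {V : ℂ → E →L[ℂ] E} (hV : PlusFactor V) :
    PlusFactor fun z => Ring.inverse (V z) := by
  obtain ⟨S, hSo, hS, hVS, hu, hVS'⟩ := hV
  refine ⟨S, hSo, hS, hVS', fun z hz => (hu z hz).ringInverse, ?_⟩
  refine hVS.congr hSo fun z hz => ?_
  exact (Ring.inverse_inverse (hu z hz)).symm

lemma PlusFactor.isUnit {V : ℂ → E →L[ℂ] E} (hV : PlusFactor V) {z : ℂ} (hz : ‖z‖ ≤ 1) :
    IsUnit (V z) := by
  obtain ⟨S, -, hS, -, hu, -⟩ := hV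
  exact hu z (hS (by simpa using hz))

end StableFactor

section Uniqueness

variable {E F : Type*} [NormedAddCommGroup E] [NormedSpace ℂ E] [CompleteSpace E]
  [NormedAddCommGroup F] [NormedSpace ℂ F] [CompleteSpace F]

lemma summable_pow_comp_comp_pow {α : F →L[ℂ] F} {α' : E →L[ℂ] E} (hα : spectrum ℂ α ⊆ ball 0 1)
    (hα' : spectrum ℂ α' ⊆ ball 0 1) (X : E →L[ℂ] F) :
    Summable fun n : ℕ => ((α ^ n) ∘L X) ∘L (α' ^ n) := by
  have h' := summable_norm_pow_of_spectrum_subset_ball hα'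
  refine .of_norm_bounded (((summable_norm_pow_of_spectrum_subset_ball hα).mul_right ‖X‖).mul_right
    (∑' n, ‖α' ^ n‖)) fun n => ?_
  refine (opNorm_comp_le _ _).trans ?_
  gcongr
  · exact opNorm_comp_le _ _
  · exact h'.le_tsum n fun _ _ => norm_nonneg _

lemma eq_zero_of_eq_comp_comp {α : F →L[ℂ] F} {α' : E →L[ℂ] E} (hα : spectrum ℂ α ⊆ ball 0 1)
    (hα' : spectrum ℂ α' ⊆ ball 0 1) {X : E →L[ℂ] F} (h : X = (α ∘L X) ∘L α') : X = 0 := by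
  have hX : ∀ n : ℕ, ((α ^ n) ∘L X) ∘L (α' ^ n) = X := by
    intro n
    induction n with
    | zero => rfl
    | succ n ih =>
      have : ((α ^ (n + 1)) ∘L X) ∘L (α' ^ (n + 1)) = ((α ^ n) ∘L ((α ∘L X) ∘L α')) ∘L (α' ^ n) := by
        rw [pow_succ, pow_succ']
        rfl
      rw [this, ← h, ih]
  have := (summable_pow_comp_comp_pow hα hα' X).tendsto_atTop_zero
  simp only [hX] at this
  exact tendsto_nhds_unique tendsto_const_nhds this

end Uniqueness

lemma stabilizing_solution_unique {δ : U →L[ℂ] U} {γp : Xp →L[ℂ] U} {αp : Xp →L[ℂ] Xp}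
    {βp : U →L[ℂ] Xp} {γm : Xm →L[ℂ] U} {αm : Xm →L[ℂ] Xm} {βm : U →L[ℂ] Xm}
    {Q₁ Q₂ : Xm →L[ℂ] Xp}
    (h₁ : SolvesLeftRiccati δ γp αp βp γm αm βm Q₁)
    (s₁ : StabilizingLeftRiccati δ γp αp βp γm αm βm Q₁)
    (h₂ : SolvesLeftRiccati δ γp αp βp γm αm βm Q₂)
    (s₂ : StabilizingLeftRiccati δ γp αp βp γm αm βm Q₂) : Q₁ = Q₂ := by
  rw [← sub_eq_zero]
  refine eq_zero_of_eq_comp_comp s₁.2 s₂.1 ?_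
  ext x
  set D₁ := δ - (γp ∘L Q₁) ∘L βm with hD₁
  set D₂ := δ - (γp ∘L Q₂) ∘L βm with hD₂
  set w := Ring.inverse D₁ (γm x - γp (Q₁ (αm x))) with hw
  set v := Ring.inverse D₂ (γm x - γp (Q₂ (αm x))) with hv
  have e₁ : Q₁ x = αp (Q₁ (αm x)) + (βp w - αp (Q₁ (βm w))) := DFunLike.congr_fun h₁.2 x
  have e₂ : Q₂ x = αp (Q₂ (αm x)) + (βp v - αp (Q₂ (βm v))) := DFunLike.congr_fun h₂.2 x
  have hDw : D₁ w = γm x - γp (Q₁ (αm x)) := apply_inverse_self h₁.1 _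
  have hDv : δ v - γp (Q₂ (βm v)) = γm x - γp (Q₂ (αm x)) := apply_inverse_self h₂.1 _
  have hδv : δ v = γm x - γp (Q₂ (αm x)) + γp (Q₂ (βm v)) := by rw [← hDv]; abel
  have hd : γp ((Q₁ - Q₂) (αm x - βm v)) = D₁ (v - w) := by
    rw [map_sub D₁, hDw]
    simp only [hD₁, sub_apply, comp_apply, map_sub, hδv]
    abel
  have hs : Ring.inverse D₁ (γp ((Q₁ - Q₂) (αm x - βm v))) = v - w := by
    rw [hd, inverse_apply_self h₁.1]
  have goal : Q₁ x - Q₂ x = αp ((Q₁ - Q₂) (αm x - βm v)) -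
      (βp (Ring.inverse D₁ (γp ((Q₁ - Q₂) (αm x - βm v)))) -
        αp (Q₁ (βm (Ring.inverse D₁ (γp ((Q₁ - Q₂) (αm x - βm v))))))) := by
    rw [hs, e₁, e₂]
    simp only [sub_apply, map_sub]
    abel
  exact goal

section Converse

variable {δ : U →L[ℂ] U} {γp : Xp →L[ℂ] U} {αp : Xp →L[ℂ] Xp}
    {βp : U →L[ℂ] Xp} {γm : Xm →L[ℂ] U} {αm : Xm →L[ℂ] Xm} {βm : U →L[ℂ] Xm}

lemma SolvesLeftRiccati.rfun_eq_mul {Q : Xm →L[ℂ] Xp}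
    (h : SolvesLeftRiccati δ γp αp βp γm αm βm Q) {z : ℂ}
    (hp : IsUnit (1 - z • αp)) (hm : IsUnit (z • (1 : Xm →L[ℂ] Xm) - αm)) :
    Rfun δ γp αp βp γm αm βm z =
      ((δ - (γp ∘L Q) ∘L βm) + z • ((γp ∘L Ring.inverse (1 - z • αp)) ∘L
        (βp - (αp ∘L Q) ∘L βm))) *
      (1 + ((Ring.inverse (δ - (γp ∘L Q) ∘L βm) ∘L (γm - (γp ∘L Q) ∘L αm)) ∘L
        Ring.inverse (z • (1 : Xm →L[ℂ] Xm) - αm)) ∘L βm) := by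
  ext u
  set D := δ - (γp ∘L Q) ∘L βm with hD
  set y := Ring.inverse (z • (1 : Xm →L[ℂ] Xm) - αm) (βm u) with hy
  set v := Ring.inverse D (γm y - γp (Q (αm y))) with hv
  have hyu : z • y - αm y = βm u := apply_inverse_self hm _
  have hDv : D v = γm y - γp (Q (αm y)) := apply_inverse_self h.1 _
  have hQ : Q y = αp (Q (αm y)) + (βp v - αp (Q (βm v))) := DFunLike.congr_fun h.2 y
  have hβv : βp v = Q y - αp (Q (αm y)) + αp (Q (βm v)) := by rw [hQ]; abel
  have hQu : Q (βm u) = z • Q y - Q (αm y) := by rw [← hyu, map_sub, map_smul]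
  have key : βp (u + v) - αp (Q (βm (u + v))) = βp u + (1 - z • αp) (Q y) := by
    simp only [map_add, hQu, hβv, sub_apply, smul_apply,
      one_apply_eq_self, map_sub, map_smul]
    abel
  have goal : δ u + z • γp (Ring.inverse (1 - z • αp) (βp u)) + γm y =
      D (u + v) + z • γp (Ring.inverse (1 - z • αp) (βp (u + v) - αp (Q (βm (u + v))))) := by
    rw [key, map_add, map_add (Ring.inverse _), inverse_apply_self hp, hDv]
    simp only [hD, sub_apply, ContinuousLinearMap.comp_apply, hQu, map_sub,
      map_add, map_smul, smul_add]
    abel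
  exact goal

lemma leftCanonicalWH_of_stabilizing_solution
    (hαp : spectrum ℂ αp ⊆ ball (0 : ℂ) 1) (hαm : spectrum ℂ αm ⊆ ball (0 : ℂ) 1)
    {Q : Xm →L[ℂ] Xp} (h : SolvesLeftRiccati δ γp αp βp γm αm βm Q)
    (s : StabilizingLeftRiccati δ γp αp βp γm αm βm Q) :
    LeftCanonicalWH (Rfun δ γp αp βp γm αm βm) := by
  set C := Ring.inverse (δ - (γp ∘L Q) ∘L βm) ∘L (γm - (γp ∘L Q) ∘L αm) with hC
  refine ⟨_, fun z => 1 + z⁻¹ • ((C ∘L Ring.inverse (1 - z⁻¹ • αm)) ∘L βm),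
    plusFactor_of_realization h.1 hαp s.2, ⟨_, plusFactor_of_realization (D := 1) (B := βm)
    (C := C) isUnit_one hαm ?_, fun z _ => rfl⟩, fun z hz => ?_⟩
  · convert s.1 using 2
    rw [Ring.inverse_one]
    rfl
  · have hz0 : z ≠ 0 := by rintro rfl; simp at hz
    have hm : IsUnit (1 - z⁻¹ • αm) := isUnit_one_sub_smul hαm (by simp [hz])
    rw [h.rfun_eq_mul (isUnit_one_sub_smul hαp hz.le)
      (by rw [smul_one_sub_eq hz0]; exact hm.smul (Units.mk0 z hz0)),
      inverse_smul_one_sub hz0 hm, ← hC, comp_smul, smul_comp]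

end Converse

section Series

variable {ι E F G : Type*} [NormedAddCommGroup E] [NormedSpace ℂ E]
  [NormedAddCommGroup F] [NormedSpace ℂ F] [NormedAddCommGroup G] [NormedSpace ℂ G]

lemma HasSum.clm_comp_left {c : ι → E →L[ℂ] F} {a : E →L[ℂ] F} (h : HasSum c a)
    (L : F →L[ℂ] G) : HasSum (fun i => L ∘L c i) (L ∘L a) :=
  (compL ℂ E F G L).hasSum h

lemma HasSum.clm_comp_right {c : ι → F →L[ℂ] G} {a : F →L[ℂ] G} (h : HasSum c a)
    (L : E →L[ℂ] F) : HasSum (fun i => c i ∘L L) (a ∘L L) :=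
  ((compL ℂ E F G).flip L).hasSum h

lemma HasCircleSeries.map {f : ℂ → E} {c : ι → E} {e : ι → ℤ} (h : HasCircleSeries f c e)
    (L : E →L[ℂ] F) : HasCircleSeries (fun z => L (f z)) (fun i => L (c i)) e where
  summable_norm := .of_nonneg_of_le (fun _ => norm_nonneg _) (fun i => L.le_opNorm (c i))
    (h.summable_norm.mul_left ‖L‖)
  hasSum z hz := by simpa using L.hasSum (h.hasSum z hz)

lemma HasCircleSeries.of_powerSeries {f : ℂ → E} {c : ℕ → E} (hc : Summable fun n => ‖c n‖)
    (h : ∀ z : ℂ, ‖z‖ ≤ 1 → HasSum (fun n => z ^ n • c n) (f z)) :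
    HasCircleSeries f c (fun n : ℕ => (n : ℤ)) where
  summable_norm := hc
  hasSum z hz := by simpa using h z hz.le

lemma HasCircleSeries.of_powerSeries_inv {f : ℂ → E} {c : ℕ → E}
    (hc : Summable fun n => ‖c n‖)
    (h : ∀ z : ℂ, ‖z‖ ≤ 1 → HasSum (fun n => z ^ n • c n) (f z)) :
    HasCircleSeries (fun z => f z⁻¹) c (fun n : ℕ => -(n : ℤ)) where
  summable_norm := hc
  hasSum z hz := by simpa using h z⁻¹ (by simp [hz])

lemma powerSeries_coeff_zero {c : ℕ → E} {a : E} (h : HasSum (fun n => (0 : ℂ) ^ n • c n) a) :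
    c 0 = a := by
  have := hasSum_single (f := fun n => (0 : ℂ) ^ n • c n) 0 fun n hn => by simp [hn]
  simpa using this.unique h

lemma neg_natCast_injective : Function.Injective fun n : ℕ => -(n : ℤ) :=
  neg_injective.comp Nat.cast_injective

lemma hasSum_powerSeries_of_succ {c : ℕ → E} {z : ℂ} {a : E}
    (h : HasSum (fun n => z ^ n • c (n + 1)) a) : HasSum (fun n => z ^ n • c n) (c 0 + z • a) := by
  have h' : HasSum (fun n => z ^ (n + 1) • c (n + 1)) (z • a) :=
    (h.const_smul z).congr_fun fun n => by rw [pow_succ', mul_smul]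
  simpa [add_comm] using (hasSum_nat_add_iff (f := fun n => z ^ n • c n) 1).1 h'

lemma summable_norm_comp_pow_comp [CompleteSpace F] {α : F →L[ℂ] F}
    (hα : spectrum ℂ α ⊆ ball 0 1) (C : F →L[ℂ] E) (B : E →L[ℂ] F) :
    Summable fun n : ℕ => ‖(C ∘L (α ^ n)) ∘L B‖ :=
  .of_nonneg_of_le (fun _ => norm_nonneg _) (fun _ => (opNorm_comp_le _ _).trans
    (mul_le_mul_of_nonneg_right (opNorm_comp_le _ _) (norm_nonneg _)))
    (((summable_norm_pow_of_spectrum_subset_ball hα).mul_left ‖C‖).mul_right ‖B‖)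

lemma hasSum_comp_resolvent_comp [CompleteSpace F] {α : F →L[ℂ] F}
    (hα : spectrum ℂ α ⊆ ball 0 1) (C : F →L[ℂ] E) (B : E →L[ℂ] F) {z : ℂ} (hz : ‖z‖ ≤ 1) :
    HasSum (fun n => z ^ n • ((C ∘L (α ^ n)) ∘L B)) ((C ∘L Ring.inverse (1 - z • α)) ∘L B) := by
  have h := ((hasSum_inverse_one_sub_smul hα hz).clm_comp_left C).clm_comp_right B
  refine h.congr_fun fun n => ?_
  rw [comp_smul, smul_comp]

lemma hasSum_realization [CompleteSpace F] {α : F →L[ℂ] F} (hα : spectrum ℂ α ⊆ ball 0 1)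
    (D : E →L[ℂ] E) (C : F →L[ℂ] E) (B : E →L[ℂ] F) {c : ℕ → E →L[ℂ] E} (h0 : c 0 = D)
    (hc : ∀ n, c (n + 1) = (C ∘L (α ^ n)) ∘L B) {z : ℂ} (hz : ‖z‖ ≤ 1) :
    HasSum (fun n => z ^ n • c n) (D + z • ((C ∘L Ring.inverse (1 - z • α)) ∘L B)) := by
  rw [← h0]
  refine hasSum_powerSeries_of_succ ?_
  refine (hasSum_comp_resolvent_comp hα C B hz).congr_fun fun n => ?_
  rw [hc]

lemma hasCircleSeries_comp_resolvent [CompleteSpace F] {α : F →L[ℂ] F}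
    (hα : spectrum ℂ α ⊆ ball 0 1) (γ : F →L[ℂ] E) :
    HasCircleSeries (fun z : ℂ => γ ∘L Ring.inverse (1 - z⁻¹ • α))
      (fun n => γ ∘L (α ^ n)) fun n : ℕ => -(n : ℤ) :=
  (HasCircleSeries.of_powerSeries_inv (f := fun z => Ring.inverse (1 - z • α))
    (summable_norm_pow_of_spectrum_subset_ball hα)
    fun _ hz => hasSum_inverse_one_sub_smul hα hz).map (compL ℂ F F E γ)

lemma hasCircleSeries_resolvent_comp [CompleteSpace F] {α : F →L[ℂ] F}
    (hα : spectrum ℂ α ⊆ ball 0 1) (β : E →L[ℂ] F) :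
    HasCircleSeries (fun z : ℂ => Ring.inverse (1 - z • α) ∘L β)
      (fun n => (α ^ n) ∘L β) fun n : ℕ => (n : ℤ) :=
  (HasCircleSeries.of_powerSeries (f := fun z => Ring.inverse (1 - z • α))
    (summable_norm_pow_of_spectrum_subset_ball hα)
    fun _ hz => hasSum_inverse_one_sub_smul hα hz).map ((compL ℂ E F F).flip β)

end Series

section Forward

variable {δ : U →L[ℂ] U} {γp : Xp →L[ℂ] U} {αp : Xp →L[ℂ] Xp}
    {βp : U →L[ℂ] Xp} {γm : Xm →L[ℂ] U} {αm : Xm →L[ℂ] Xm} {βm : U →L[ℂ] Xm}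

/-- The Laurent coefficients of `Rfun` on the unit circle. -/
def rfunCoeff (δ : U →L[ℂ] U) (γp : Xp →L[ℂ] U) (αp : Xp →L[ℂ] Xp) (βp : U →L[ℂ] Xp)
    (γm : Xm →L[ℂ] U) (αm : Xm →L[ℂ] Xm) (βm : U →L[ℂ] Xm) : ℤ → U →L[ℂ] U
  | Int.ofNat 0 => δ
  | Int.ofNat (n + 1) => (γp ∘L (αp ^ n)) ∘L βp
  | Int.negSucc n => (γm ∘L (αm ^ n)) ∘L βm

lemma hasCircleSeries_rfun
    (hαp : spectrum ℂ αp ⊆ ball (0 : ℂ) 1) (hαm : spectrum ℂ αm ⊆ ball (0 : ℂ) 1) :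
    HasCircleSeries (Rfun δ γp αp βp γm αm βm) (rfunCoeff δ γp αp βp γm αm βm) id where
  summable_norm := by
    refine .of_nat_of_neg_add_one ?_ ?_
    · rw [← summable_nat_add_iff 1]
      exact summable_norm_comp_pow_comp hαp γp βp
    · exact summable_norm_comp_pow_comp hαm γm βm
  hasSum z hz := by
    have hz0 : z ≠ 0 := by rintro rfl; simp at hz
    have hzi : ‖z⁻¹‖ ≤ 1 := by simp [hz]
    rw [Rfun, inverse_smul_one_sub hz0 (isUnit_one_sub_smul hαm hzi), comp_smul, smul_comp]
    refine .of_nat_of_neg_add_one ?_ ?_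
    · refine (hasSum_realization hαp δ γp βp
        (c := fun n : ℕ => rfunCoeff δ γp αp βp γm αm βm n) rfl (fun n => rfl)
        hz.le).congr_fun fun n => ?_
      rw [id, zpow_natCast]
    · refine ((hasSum_comp_resolvent_comp hαm γm βm hzi).const_smul z⁻¹).congr_fun fun n => ?_
      have hn : rfunCoeff δ γp αp βp γm αm βm (-(n + 1)) = (γm ∘L (αm ^ n)) ∘L βm := rfl
      have hpow : z ^ (-((n : ℤ) + 1)) = z⁻¹ * z⁻¹ ^ n := by
        rw [zpow_neg, ← inv_zpow, zpow_add_one₀ (inv_ne_zero hz0), zpow_natCast, mul_comm]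
      rw [id, hn, hpow, mul_smul]

/-- Multiplying a function of plus type on the right by `γ(I - z⁻¹α)⁻¹` and taking Fourier
coefficients of nonpositive index gives a sequence of the form `Γ α ^ k`. -/
lemma exists_circleCoeff_comp_resolvent {E F : Type*} [NormedAddCommGroup E]
    [InnerProductSpace ℂ E] [CompleteSpace E] [NormedAddCommGroup F] [InnerProductSpace ℂ F]
    [CompleteSpace F] {α : F →L[ℂ] F} (hα : spectrum ℂ α ⊆ ball (0 : ℂ) 1) (γ : F →L[ℂ] E)
    {f : ℂ → E →L[ℂ] E} {c : ℕ → E →L[ℂ] E} (hf : HasCircleSeries f c fun n : ℕ => (n : ℤ)) :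
    ∃ Γ : F →L[ℂ] E, (HasSum (fun n => (c n ∘L γ) ∘L (α ^ n)) Γ) ∧
      ∀ k : ℕ, circleCoeff (fun z => f z ∘L (γ ∘L Ring.inverse (1 - z⁻¹ • α))) (-(k : ℤ)) =
        Γ ∘L (α ^ k) := by
  have hK := hasCircleSeries_comp_resolvent hα γ
  have h : ∀ k : ℕ, HasSum (fun n => (c n ∘L γ) ∘L (α ^ (n + k)))
      (circleCoeff (fun z => f z ∘L (γ ∘L Ring.inverse (1 - z⁻¹ • α))) (-(k : ℤ))) := by
    intro k
    convert hf.hasSum_circleCoeff_comp hK.continuousOn (-(k : ℤ)) using 2 with n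
    have : -(k : ℤ) - n = -((n + k : ℕ) : ℤ) := by push_cast; ring
    rw [this, hK.circleCoeff_eq neg_natCast_injective (n + k), comp_assoc]
  refine ⟨_, h 0, fun k => (h k).unique ?_⟩
  refine ((h 0).clm_comp_right (α ^ k)).congr_fun fun n => ?_
  rw [pow_add]
  rfl

/-- Multiplying a function of minus type on the left by `(I - zα)⁻¹β` and taking Fourier
coefficients of nonnegative index gives a sequence of the form `α ^ k B`. -/
lemma exists_circleCoeff_resolvent_comp {E F : Type*} [NormedAddCommGroup E]
    [InnerProductSpace ℂ E] [CompleteSpace E] [NormedAddCommGroup F] [InnerProductSpace ℂ F]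
    [CompleteSpace F] {α : F →L[ℂ] F} (hα : spectrum ℂ α ⊆ ball (0 : ℂ) 1) (β : E →L[ℂ] F)
    {g : ℂ → E →L[ℂ] E} {c : ℕ → E →L[ℂ] E} (hg : HasCircleSeries g c fun n : ℕ => -(n : ℤ)) :
    ∃ B : E →L[ℂ] F, (HasSum (fun n => (α ^ n) ∘L (β ∘L c n)) B) ∧
      ∀ k : ℕ, circleCoeff (fun z => (Ring.inverse (1 - z • α) ∘L β) ∘L g z) (k : ℤ) =
        (α ^ k) ∘L B := by
  have hK := hasCircleSeries_resolvent_comp hα β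
  have h : ∀ k : ℕ, HasSum (fun n => (α ^ (k + n)) ∘L (β ∘L c n))
      (circleCoeff (fun z => (Ring.inverse (1 - z • α) ∘L β) ∘L g z) (k : ℤ)) := by
    intro k
    convert hg.hasSum_comp_circleCoeff hK.continuousOn (k : ℤ) using 2 with n
    have : (k : ℤ) - -(n : ℤ) = ((k + n : ℕ) : ℤ) := by push_cast; ring
    rw [this, hK.circleCoeff_eq Nat.cast_injective (k + n), comp_assoc]
  refine ⟨_, (h 0).congr_fun fun n => by rw [zero_add], fun k => (h k).unique ?_⟩
  refine ((h 0).clm_comp_left (α ^ k)).congr_fun fun n => ?_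
  rw [pow_add, zero_add]
  rfl

lemma exists_stabilizing_solution_of_leftCanonicalWH
    (hαp : spectrum ℂ αp ⊆ ball (0 : ℂ) 1) (hαm : spectrum ℂ αm ⊆ ball (0 : ℂ) 1)
    (h : LeftCanonicalWH (Rfun δ γp αp βp γm αm βm)) :
    ∃ Q : Xm →L[ℂ] Xp, SolvesLeftRiccati δ γp αp βp γm αm βm Q ∧
      StabilizingLeftRiccati δ γp αp βp γm αm βm Q := by
  obtain ⟨P, W, hP, ⟨M, hM, hWM⟩, hR⟩ := h
  replace hR : ∀ z : ℂ, ‖z‖ = 1 → Rfun δ γp αp βp γm αm βm z = P z ∘L M z⁻¹ := fun z hz => by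
    rw [hR z hz, hWM z hz.ge]; rfl
  obtain ⟨p, hp, hpP⟩ := hP.exists_series
  obtain ⟨f, hf, hfP⟩ := hP.inverse.exists_series
  obtain ⟨m, hm, hmM⟩ := hM.exists_series
  obtain ⟨g, hg, hgM⟩ := hM.inverse.exists_series
  have hPs := HasCircleSeries.of_powerSeries hp hpP
  have hFs := HasCircleSeries.of_powerSeries hf hfP
  have hMs := HasCircleSeries.of_powerSeries_inv hm hmM
  have hGs := HasCircleSeries.of_powerSeries_inv hg hgM
  have hRs := hasCircleSeries_rfun (δ := δ) (γp := γp) (βp := βp) (γm := γm) (βm := βm) hαp hαm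
  have hRc : ∀ k, circleCoeff (Rfun δ γp αp βp γm αm βm) k = rfunCoeff δ γp αp βp γm αm βm k :=
    hRs.circleCoeff_eq Function.injective_id
  have hKm := hasCircleSeries_comp_resolvent hαm γm
  have hKp := hasCircleSeries_resolvent_comp hαp βp
  obtain ⟨Γ, hΓ, hΓc⟩ := exists_circleCoeff_comp_resolvent hαm γm hFs
  obtain ⟨B, hB, hBc⟩ := exists_circleCoeff_resolvent_comp hαp βp hGs
  have hp0 : p 0 = P 0 := powerSeries_coeff_zero (hpP 0 (by simp))
  have hm0 : m 0 = M 0 := powerSeries_coeff_zero (hmM 0 (by simp))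
  have hp0u : IsUnit (p 0) := hp0 ▸ hP.isUnit (by simp)
  have hm0u : IsUnit (m 0) := hm0 ▸ hM.isUnit (by simp)
  -- the Taylor coefficients of both factors
  have hmj : ∀ j, m (j + 1) = (Γ ∘L (αm ^ j)) ∘L βm := by
    intro j
    have h1 := hFs.hasSum_circleCoeff_comp hRs.continuousOn (-((j + 1 : ℕ) : ℤ))
    rw [circleCoeff_congr (g := fun z => M z⁻¹) fun z hz => by
      rw [hR z hz]
      ext u
      exact inverse_apply_self (hP.isUnit hz.le) _] at h1
    rw [hMs.circleCoeff_eq neg_natCast_injective (j + 1)] at h1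
    refine h1.unique ?_
    refine ((hΓ.clm_comp_right (αm ^ j)).clm_comp_right βm).congr_fun fun n => ?_
    have : -((j + 1 : ℕ) : ℤ) - n = Int.negSucc (n + j) := by
      rw [Int.negSucc_eq]; push_cast; ring
    rw [this, hRc, rfunCoeff, pow_add]
    rfl
  have hpj : ∀ j, p (j + 1) = (γp ∘L (αp ^ j)) ∘L B := by
    intro j
    have h1 := hGs.hasSum_comp_circleCoeff hRs.continuousOn ((j + 1 : ℕ) : ℤ)
    rw [circleCoeff_congr (g := P) fun z hz => by
      rw [hR z hz]
      ext u
      exact congrArg (P z) (apply_inverse_self (hM.isUnit (z := z⁻¹) (by simp [hz])) u)] at h1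
    rw [hPs.circleCoeff_eq Nat.cast_injective (j + 1)] at h1
    refine h1.unique ?_
    refine (hB.clm_comp_left (γp ∘L (αp ^ j))).congr_fun fun n => ?_
    have : ((j + 1 : ℕ) : ℤ) - -(n : ℤ) = Int.ofNat (j + n + 1) := by
      rw [Int.ofNat_eq_natCast]; push_cast; ring
    rw [this, hRc, rfunCoeff, pow_add]
    rfl
  obtain ⟨Q, hQ⟩ := summable_pow_comp_comp_pow hαp hαm (B ∘L Γ)
  have hstein : Q = (αp ∘L Q) ∘L αm + B ∘L Γ := by
    rw [← sub_eq_iff_eq_add]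
    have h1 : HasSum (fun n => ((αp ^ (n + 1)) ∘L (B ∘L Γ)) ∘L (αm ^ (n + 1)))
        (Q - B ∘L Γ) := by simpa [one_def] using (hasSum_nat_add_iff' 1).2 hQ
    refine h1.unique (((hQ.clm_comp_left αp).clm_comp_right αm).congr_fun fun n => ?_)
    rw [pow_succ', pow_succ]
    rfl
  have hC : γm - (γp ∘L Q) ∘L αm = p 0 ∘L Γ := by
    rw [sub_eq_iff_eq_add, ← sub_eq_iff_eq_add']
    have hK : ContinuousOn (fun z => Ring.inverse (P z) ∘L (γm ∘L Ring.inverse (1 - z⁻¹ • αm)))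
        (sphere 0 1) := hFs.continuousOn.clm_comp (hKm.continuousOn)
    have h1 := hPs.hasSum_circleCoeff_comp hK 0
    rw [circleCoeff_congr (g := fun z => γm ∘L Ring.inverse (1 - z⁻¹ • αm)) fun z hz => by
      ext u
      exact apply_inverse_self (hP.isUnit hz.le) _] at h1
    have h2 : circleCoeff (fun z => γm ∘L Ring.inverse (1 - z⁻¹ • αm)) 0 = γm :=
      hKm.circleCoeff_eq neg_natCast_injective 0
    rw [h2] at h1
    replace h1 : HasSum (fun n => p n ∘L (Γ ∘L (αm ^ n))) γm :=
      h1.congr_fun fun n => by rw [zero_sub, hΓc]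
    have h3 : HasSum (fun n => p (n + 1) ∘L (Γ ∘L (αm ^ (n + 1)))) (γm - p 0 ∘L Γ) := by
      simpa [one_def] using (hasSum_nat_add_iff' 1).2 h1
    refine h3.unique (((hQ.clm_comp_left γp).clm_comp_right αm).congr_fun fun n => ?_)
    rw [hpj, pow_succ]
    rfl
  have hB' : βp - (αp ∘L Q) ∘L βm = B ∘L m 0 := by
    rw [sub_eq_iff_eq_add, ← sub_eq_iff_eq_add']
    have hK : ContinuousOn (fun z => (Ring.inverse (1 - z • αp) ∘L βp) ∘L Ring.inverse (M z⁻¹))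
        (sphere 0 1) := hKp.continuousOn.clm_comp hGs.continuousOn
    have h1 := hMs.hasSum_comp_circleCoeff hK 0
    rw [circleCoeff_congr (g := fun z => Ring.inverse (1 - z • αp) ∘L βp) fun z hz => by
      ext u
      exact congrArg (Ring.inverse (1 - z • αp) ∘L βp)
        (inverse_apply_self (hM.isUnit (z := z⁻¹) (by simp [hz])) u)] at h1
    have h2 : circleCoeff (fun z => Ring.inverse (1 - z • αp) ∘L βp) 0 = βp :=
      hKp.circleCoeff_eq Nat.cast_injective 0
    rw [h2] at h1
    replace h1 : HasSum (fun n => ((αp ^ n) ∘L B) ∘L m n) βp :=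
      h1.congr_fun fun n => by rw [zero_sub, neg_neg, hBc]
    have h3 : HasSum (fun n => ((αp ^ (n + 1)) ∘L B) ∘L m (n + 1)) (βp - B ∘L m 0) := by
      simpa [one_def] using (hasSum_nat_add_iff' 1).2 h1
    refine h3.unique (((hQ.clm_comp_left αp).clm_comp_right βm).congr_fun fun n => ?_)
    rw [hmj, pow_succ']
    rfl
  have hD : δ - (γp ∘L Q) ∘L βm = p 0 * m 0 := by
    rw [sub_eq_iff_eq_add, ← sub_eq_iff_eq_add']
    have h1 := hPs.hasSum_circleCoeff_comp hMs.continuousOn 0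
    rw [← circleCoeff_congr hR, hRc] at h1
    replace h1 : HasSum (fun n => p n ∘L m n) δ := h1.congr_fun fun n => by
      rw [zero_sub, hMs.circleCoeff_eq neg_natCast_injective n]
    have h3 : HasSum (fun n => p (n + 1) ∘L m (n + 1)) (δ - p 0 * m 0) := by
      simpa [mul_def] using (hasSum_nat_add_iff' 1).2 h1
    refine h3.unique (((hQ.clm_comp_left γp).clm_comp_right βm).congr_fun fun n => ?_)
    rw [hpj, hmj]
    rfl
  have hinv : Ring.inverse (p 0 * m 0) = Ring.inverse (m 0) ∘L Ring.inverse (p 0) := by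
    obtain ⟨u, hu⟩ := hp0u
    obtain ⟨v, hv⟩ := hm0u
    rw [← hu, ← hv, ← Units.val_mul, Ring.inverse_unit, Ring.inverse_unit, Ring.inverse_unit,
      mul_inv_rev]
    rfl
  refine ⟨Q, ⟨hD ▸ hp0u.mul hm0u, ?_⟩, ?_, ?_⟩
  · rw [hB', hC, hD, hinv]
    refine hstein.trans (congrArg _ ?_)
    ext x
    simp [apply_inverse_self hm0u, inverse_apply_self hp0u]
  · have h1 := spectrum_subset_ball_of_isUnit_realization hm0u (C := Γ) (B := βm) hαm
      fun w hw => by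
        rw [(hasSum_realization hαm (m 0) Γ βm rfl hmj hw).unique (hmM w hw)]
        exact hM.isUnit hw
    convert h1 using 3
    rw [hC, hD, hinv]
    ext x
    simp [inverse_apply_self hp0u]
  · have h1 := spectrum_subset_ball_of_isUnit_realization hp0u (C := γp) (B := B) hαp
      fun w hw => by
        rw [(hasSum_realization hαp (p 0) γp B rfl hpj hw).unique (hpP w hw)]
        exact hP.isUnit hw
    convert h1 using 3
    rw [hB', hD, hinv]
    ext x
    simp [apply_inverse_self hm0u]

end Forward

/-- `R` admits a left canonical Wiener–Hopf factorization if and only if the left Riccati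
equation has a stabilizing solution; moreover there is at most one stabilizing solution. -/
theorem leftCanonicalWH_iff_exists_stabilizing_solution
    (δ : U →L[ℂ] U) (γp : Xp →L[ℂ] U) (αp : Xp →L[ℂ] Xp) (βp : U →L[ℂ] Xp)
    (γm : Xm →L[ℂ] U) (αm : Xm →L[ℂ] Xm) (βm : U →L[ℂ] Xm)
    (hαp : spectrum ℂ αp ⊆ ball (0 : ℂ) 1) (hαm : spectrum ℂ αm ⊆ ball (0 : ℂ) 1)
    (r₁ r₂ : ℝ) (hr₁ : r₁ < 1) (hr₂ : 1 < r₂)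
    (hRinv : ∀ z : ℂ, r₁ < ‖z‖ → ‖z‖ < r₂ → IsUnit (Rfun δ γp αp βp γm αm βm z)) :
    (LeftCanonicalWH (Rfun δ γp αp βp γm αm βm) ↔
      ∃ Qt : Xm →L[ℂ] Xp, SolvesLeftRiccati δ γp αp βp γm αm βm Qt ∧
        StabilizingLeftRiccati δ γp αp βp γm αm βm Qt) ∧
    (∀ Qt₁ Qt₂ : Xm →L[ℂ] Xp,
      SolvesLeftRiccati δ γp αp βp γm αm βm Qt₁ →
      StabilizingLeftRiccati δ γp αp βp γm αm βm Qt₁ →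
      SolvesLeftRiccati δ γp αp βp γm αm βm Qt₂ →
      StabilizingLeftRiccati δ γp αp βp γm αm βm Qt₂ → Qt₁ = Qt₂) := by
  exact ⟨⟨exists_stabilizing_solution_of_leftCanonicalWH hαp hαm,
    fun ⟨_, h, s⟩ => leftCanonicalWH_of_stabilizing_solution hαp hαm h s⟩,
    fun _ _ h₁ s₁ h₂ s₂ => stabilizing_solution_unique h₁ s₁ h₂ s₂⟩
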